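/- Suppose n ≥ 1 and r = 2. Then for every function h in C_b^{1,2}([0,∞)), |E[h(F_2)] − χ²_{(1)}h| ≤ (1/n)·(69 + 43/n)·(‖h'‖ + ‖h''‖). -/

import Mathlib

open MeasureTheory Finset Real

noncomputable section

instance instMSPerm (r : ℕ) : MeasurableSpace (Equiv.Perm (Fin r)) := ⊤

/-- The joint law of `n` independent uniformly random permutations of `{1, …, r}`:
the uniform probability measure on the finite product space. -/
def friedmanMeasure (n r : ℕ) : Measure (Fin n → Equiv.Perm (Fin r)) :=
  (PMF.uniformOfFintype (Fin n → Equiv.Perm (Fin r))).toMeasure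

/-- `ρ_i(j) = π_i(j) - (r+1)/2`, where `π_i(j) ∈ {1, …, r}` is the rank assigned by the
`i`-th permutation to treatment `j` (a permutation of `Fin r` assigns values in `{0, …, r-1}`,
hence the `+ 1`). -/
def rho (n r : ℕ) (i : Fin n) (j : Fin r) (ω : Fin n → Equiv.Perm (Fin r)) : ℝ :=
  ((ω i j : ℕ) : ℝ) + 1 - ((r : ℝ) + 1) / 2

/-- `S_j = (√12/√(r(r+1)n)) ∑_{i=1}^n ρ_i(j)`. -/
def Sstat (n r : ℕ) (j : Fin r) (ω : Fin n → Equiv.Perm (Fin r)) : ℝ :=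
  Real.sqrt 12 / Real.sqrt ((r : ℝ) * ((r : ℝ) + 1) * (n : ℝ)) * ∑ i, rho n r i j ω

/-- Friedman's statistic `F_r = ∑_{j=1}^r S_j²`. -/
def friedman (n r : ℕ) (ω : Fin n → Equiv.Perm (Fin r)) : ℝ :=
  ∑ j, (Sstat n r j ω) ^ 2

/-- The chi-square distribution with `p` degrees of freedom: the Gamma distribution
with shape `p/2` and rate `1/2`. -/
def chiSq (p : ℕ) : Measure ℝ := ProbabilityTheory.gammaMeasure ((p : ℝ) / 2) (1 / 2)

end

/-!
With `r = 2` the statistic is `W ^ 2` for a normalised Rademacher sum `W`, and `χ²₁` is the law of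
the square of a standard normal variable, so the claim compares `W` with the normal law on the even
test function `g w = h (w ^ 2)`. Stein's equation `f' w - w * f w = g w - 𝔼 g` turns the error into
`𝔼 (f' W - W * f W)`. Averaging over one sign at a time, the other signs being fixed, rewrites this
as a sum of errors of the trapezoid rule for `f'` on intervals of length `2 / √n`. Each is of order
`n ^ (-3/2)` and carries a further factor `n ^ (-1/2)`, so their sum is of order `1 / n`, provided
that the third derivative of `f` has at most quadratic growth. This holds since `g` is even, so that
`g' w = O(w)` and the half-line integral of the right-hand side against the normal density vanishes.
-/

noncomputable section

open ProbabilityTheory Filter Topology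
open scoped BigOperators

section Calculus

lemma abs_trapezoid_sub_le {f f₁ f₂ f₃ : ℝ → ℝ} (hf : ∀ x, HasDerivAt f (f₁ x) x)
    (hf₁ : ∀ x, HasDerivAt f₁ (f₂ x) x) (hf₂ : ∀ x, HasDerivAt f₂ (f₃ x) x) {a b L : ℝ}
    (hab : a < b) (hL : ∀ u ∈ Set.Icc a b, |f₃ u| ≤ L) :
    |(b - a) / 2 * (f₁ a + f₁ b) - (f b - f a)| ≤ (b - a) ^ 3 * L / 12 := by
  have hderiv : Set.EqOn (derivWithin f₁ (Set.Icc a b)) f₂ (Set.Icc a b) := fun x hx =>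
    (hf₁ x).hasDerivWithinAt.derivWithin (uniqueDiffOn_Icc hab x hx)
  have hbound (x : ℝ) : |iteratedDerivWithin 2 f₁ (Set.Icc a b) x| ≤ L := by
    rw [iteratedDerivWithin_eq_iterate, Function.iterate_succ, Function.iterate_one,
      Function.comp_apply]
    by_cases hx : x ∈ Set.Icc a b
    · rw [derivWithin_congr hderiv (hderiv hx),
        (hf₂ x).hasDerivWithinAt.derivWithin (uniqueDiffOn_Icc hab x hx)]
      exact hL x hx
    · rw [derivWithin_zero_of_notMem_closure (by rwa [closure_Icc]), abs_zero]
      exact (abs_nonneg _).trans (hL a (Set.left_mem_Icc.2 hab.le))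
  have hint : ∫ x in a..b, f₁ x = f b - f a :=
    intervalIntegral.integral_eq_sub_of_hasDerivAt (fun x _ => hf x)
      ((continuous_iff_continuousAt.2 fun x => (hf₁ x).continuousAt).intervalIntegrable _ _)
  rw [← Set.uIcc_of_le hab.le] at hbound hderiv
  have h := trapezoidal_error_le (fun x _ => (hf₁ x).differentiableAt.differentiableWithinAt)
    (DifferentiableOn.congr (fun x _ => (hf₂ x).differentiableAt.differentiableWithinAt) hderiv)
    hbound one_pos
  simpa [trapezoidal_error, hint, abs_of_pos (sub_pos.2 hab)] using h

lemma abs_trapezoid_sub_le_of_growth {f f₁ f₂ f₃ : ℝ → ℝ} {A B a : ℝ}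
    (hf : ∀ w, HasDerivAt f (f₁ w) w) (hf₁ : ∀ w, HasDerivAt f₁ (f₂ w) w)
    (hf₂ : ∀ w, HasDerivAt f₂ (f₃ w) w) (hB : 0 ≤ B) (hf₃ : ∀ w, |f₃ w| ≤ A + B * w ^ 2)
    (ha : 0 < a) (v : ℝ) :
    |a * (f₁ (v + a) + f₁ (v - a)) - (f (v + a) - f (v - a))| ≤
      2 / 3 * a ^ 3 * (A + B * ((v + a) ^ 2 + (v - a) ^ 2)) := by
  have hL (u : ℝ) (hu : u ∈ Set.Icc (v - a) (v + a)) :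
      |f₃ u| ≤ A + B * ((v + a) ^ 2 + (v - a) ^ 2) := by
    refine (hf₃ u).trans ?_
    gcongr
    rcases le_total 0 u with h | h <;> nlinarith [hu.1, hu.2]
  convert! abs_trapezoid_sub_le hf hf₁ hf₂ (by linarith : v - a < v + a) hL using 1
  · congr 1; ring
  · ring

lemma nonneg_of_deriv_nonpos_of_tendsto_zero {K K' : ℝ → ℝ} {w : ℝ}
    (hK : ∀ x, HasDerivAt K (K' x) x) (hK' : ∀ x, w ≤ x → K' x ≤ 0)
    (hlim : Tendsto K atTop (𝓝 0)) : 0 ≤ K w := by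
  have hanti : AntitoneOn K (Set.Ici w) :=
    antitoneOn_of_hasDerivWithinAt_nonpos (convex_Ici w)
      (fun x _ => (hK x).continuousAt.continuousWithinAt)
      (fun x _ => (hK x).hasDerivWithinAt) fun x hx => hK' x (interior_subset hx)
  exact le_of_tendsto hlim (eventually_atTop.2 ⟨w, fun x hx => hanti Set.self_mem_Ici hx hx⟩)

lemma abs_le_of_abs_deriv_le_neg_deriv_of_tendsto_zero {K K' M M' : ℝ → ℝ} {w : ℝ}
    (hK : ∀ x, HasDerivAt K (K' x) x) (hM : ∀ x, HasDerivAt M (M' x) x)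
    (hK' : ∀ x, w ≤ x → |K' x| ≤ -M' x) (hKlim : Tendsto K atTop (𝓝 0))
    (hMlim : Tendsto M atTop (𝓝 0)) : |K w| ≤ M w := by
  have hsub : 0 ≤ M w - K w :=
    nonneg_of_deriv_nonpos_of_tendsto_zero (K := M - K) (fun x => (hM x).sub (hK x))
      (fun x hx => by linarith [neg_le_of_abs_le (hK' x hx)]) (sub_zero (0 : ℝ) ▸ hMlim.sub hKlim)
  have hadd : 0 ≤ M w + K w :=
    nonneg_of_deriv_nonpos_of_tendsto_zero (K := M + K) (fun x => (hM x).add (hK x))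
      (fun x hx => by linarith [le_of_abs_le (hK' x hx)]) (add_zero (0 : ℝ) ▸ hMlim.add hKlim)
  exact abs_le.2 ⟨by linarith, by linarith⟩

-- `K` increases as long as `p ≤ 0` and decreases afterwards, so it lies above its limits.
lemma nonneg_of_deriv_eq_neg_monotone_mul {K p q : ℝ → ℝ}
    (hK : ∀ x, HasDerivAt K (-(p x * q x)) x) (hq : ∀ x, 0 ≤ q x)
    (hp : MonotoneOn p (Set.Ici 0)) (h0 : K 0 = 0)
    (hlim : Tendsto K atTop (𝓝 0)) {w : ℝ} (hw : 0 ≤ w) : 0 ≤ K w := by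
  rcases le_total (p w) 0 with hpw | hpw
  · have hmono : MonotoneOn K (Set.Icc 0 w) :=
      monotoneOn_of_hasDerivWithinAt_nonneg (convex_Icc 0 w)
        (fun x _ => (hK x).continuousAt.continuousWithinAt)
        (fun x _ => (hK x).hasDerivWithinAt) fun x hx => by
          have hx' := interior_subset hx
          exact neg_nonneg.2 (mul_nonpos_of_nonpos_of_nonneg
            ((hp hx'.1 hw hx'.2).trans hpw) (hq x))
    exact h0 ▸ hmono (Set.left_mem_Icc.2 hw) (Set.right_mem_Icc.2 hw) hw
  · exact nonneg_of_deriv_nonpos_of_tendsto_zero hK (fun x hx => neg_nonpos.2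
      (mul_nonneg (hpw.trans (hp hw (hw.trans hx) hx)) (hq x))) hlim

end Calculus

local notation "φ" => gaussianPDFReal 0 1

section Gaussian

lemma gaussianPDFReal_zero_one_apply (w : ℝ) :
    φ w = (√(2 * π))⁻¹ * exp (-(1 / 2) * w ^ 2) := by
  simp [gaussianPDFReal, div_eq_inv_mul]

lemma gaussianPDFReal_zero_one_neg (w : ℝ) : φ (-w) = φ w := by
  simp only [gaussianPDFReal_zero_one_apply, neg_sq]

lemma gaussianPDFReal_zero_one_pos (w : ℝ) : 0 < φ w :=
  gaussianPDFReal_pos 0 1 w one_ne_zero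

lemma hasDerivAt_gaussianPDFReal_zero_one (w : ℝ) : HasDerivAt φ (-w * φ w) w := by
  rw [funext gaussianPDFReal_zero_one_apply]
  convert! (((hasDerivAt_pow 2 w).const_mul (-(1 / 2) : ℝ)).exp).const_mul (√(2 * π))⁻¹ using 1
  ring

lemma continuous_gaussianPDFReal_zero_one : Continuous φ :=
  continuous_iff_continuousAt.2 fun w => (hasDerivAt_gaussianPDFReal_zero_one w).continuousAt

lemma tendsto_pow_mul_gaussianPDFReal_zero_one (k : ℕ) :
    Tendsto (fun w => w ^ k * φ w) atTop (𝓝 0) := by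
  have hexp : Tendsto (fun w : ℝ => exp (-(1 / 2) * w)) atTop (𝓝 0) :=
    tendsto_exp_atBot.comp (tendsto_id.const_mul_atTop_of_neg (by norm_num))
  have h := ((rpow_mul_exp_neg_mul_sq_isLittleO_exp_neg one_half_pos
    k).tendsto_zero_of_tendsto hexp).const_mul (√(2 * π))⁻¹
  simpa only [gaussianPDFReal_zero_one_apply, rpow_natCast, mul_left_comm, mul_zero] using h

lemma integrable_pow_mul_gaussianPDFReal_zero_one (k : ℕ) :
    Integrable fun w => w ^ k * φ w := by
  have h := (integrable_rpow_mul_exp_neg_mul_sq one_half_pos (s := k)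
    (by linarith [k.cast_nonneg (α := ℝ)])).const_mul (√(2 * π))⁻¹
  simpa only [gaussianPDFReal_zero_one_apply, rpow_natCast, mul_left_comm] using h

lemma abs_mul_gaussianPDFReal_zero_one_le {g : ℝ → ℝ} {A B : ℝ}
    (hgrowth : ∀ w, |g w| ≤ A + B * w ^ 2) (w : ℝ) :
    |g w * φ w| ≤ A * (w ^ 0 * φ w) + B * (w ^ 2 * φ w) := by
  rw [abs_mul, abs_of_pos (gaussianPDFReal_zero_one_pos w)]
  exact (mul_le_mul_of_nonneg_right (hgrowth w) (gaussianPDFReal_zero_one_pos w).le).trans_eq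
    (by ring)

lemma integrable_mul_gaussianPDFReal_zero_one {g : ℝ → ℝ} {A B : ℝ} (hg : Continuous g)
    (hgrowth : ∀ w, |g w| ≤ A + B * w ^ 2) : Integrable fun w => g w * φ w :=
  (((integrable_pow_mul_gaussianPDFReal_zero_one 0).const_mul A).add
    ((integrable_pow_mul_gaussianPDFReal_zero_one 2).const_mul B)).mono'
    (hg.mul continuous_gaussianPDFReal_zero_one).aestronglyMeasurable
    (.of_forall (abs_mul_gaussianPDFReal_zero_one_le hgrowth))

lemma tendsto_mul_gaussianPDFReal_zero_one {g : ℝ → ℝ} {A B : ℝ}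
    (hgrowth : ∀ w, |g w| ≤ A + B * w ^ 2) : Tendsto (fun w => g w * φ w) atTop (𝓝 0) :=
  squeeze_zero_norm (abs_mul_gaussianPDFReal_zero_one_le hgrowth) <| by
    simpa only [mul_zero, add_zero] using
      ((tendsto_pow_mul_gaussianPDFReal_zero_one 0).const_mul A).add
        ((tendsto_pow_mul_gaussianPDFReal_zero_one 2).const_mul B)

lemma integral_gaussianReal_eq_two_mul_setIntegral_Ioi {g : ℝ → ℝ}
    (heven : ∀ w, g (-w) = g w) :
    ∫ w, g w ∂gaussianReal 0 1 = 2 * ∫ w in Set.Ioi (0 : ℝ), g w * φ w := by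
  have habs (w : ℝ) : g |w| * φ |w| = φ w • g w := by
    rcases abs_choice w with h | h <;>
      simp only [h, heven, gaussianPDFReal_zero_one_neg, smul_eq_mul, mul_comm]
  rw [integral_gaussianReal_eq_integral_smul one_ne_zero, ← integral_congr_ae (.of_forall habs),
    integral_comp_abs (f := fun w => g w * φ w)]

lemma integrable_gaussianReal_of_growth {g : ℝ → ℝ} {A B : ℝ} (hg : Continuous g)
    (hgrowth : ∀ w, |g w| ≤ A + B * w ^ 2) : Integrable g (gaussianReal 0 1) := by
  have h2 : Integrable (fun w : ℝ => w ^ 2) (gaussianReal 0 1) :=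
    (memLp_id_gaussianReal 2).integrable_sq
  exact ((integrable_const A).add (h2.const_mul B)).mono' hg.aestronglyMeasurable
    (.of_forall hgrowth)

end Gaussian

section Stein

variable {g g₁ g₂ : ℝ → ℝ} {A B C : ℝ}

lemma hasDerivAt_integral_mul_gaussianPDFReal_zero_one (hg : Continuous g) (w : ℝ) :
    HasDerivAt (fun w => ∫ u in (0 : ℝ)..w, g u * φ u) (g w * φ w) w :=
  (hg.mul continuous_gaussianPDFReal_zero_one).integral_hasStrictDerivAt 0 w |>.hasDerivAt

lemma monotoneOn_add_mul_sq (hg : ∀ w, HasDerivAt g (g₁ w) w) (hg₁ : ∀ w, |g₁ w| ≤ 2 * C * |w|) :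
    MonotoneOn (fun w => g w + C * w ^ 2) (Set.Ici 0) := by
  have hderiv (w : ℝ) : HasDerivAt (fun w => g w + C * w ^ 2) (g₁ w + 2 * C * w) w := by
    convert! (hg w).add ((hasDerivAt_pow 2 w).const_mul C) using 1
    ring
  refine monotoneOn_of_hasDerivWithinAt_nonneg (convex_Ici 0)
    (fun w _ => (hderiv w).continuousAt.continuousWithinAt)
    (fun w _ => (hderiv w).hasDerivWithinAt) fun w hw => ?_
  have h := neg_le_of_abs_le (hg₁ w)
  rw [abs_of_nonneg (interior_subset hw)] at h
  linarith

lemma abs_le_add_mul_sq (hg : ∀ w, HasDerivAt g (g₁ w) w) (heven : ∀ w, g (-w) = g w)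
    (hg₁ : ∀ w, |g₁ w| ≤ 2 * C * |w|) (w : ℝ) : |g w| ≤ |g 0| + C * w ^ 2 := by
  have hlower := monotoneOn_add_mul_sq hg hg₁ Set.self_mem_Ici (abs_nonneg w) (abs_nonneg w)
  have hupper := monotoneOn_add_mul_sq (fun w => (hg w).neg) (by simpa using hg₁)
    Set.self_mem_Ici (abs_nonneg w) (abs_nonneg w)
  have habs : g |w| = g w := by rcases abs_choice w with h | h <;> simp only [h, heven]
  simp only [Pi.neg_apply, sq_abs, habs] at hlower hupper
  rw [abs_le]
  constructor <;> linarith [neg_abs_le (g 0), le_abs_self (g 0)]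

lemma integral_mul_gaussianPDFReal_zero_one_le (hg : Continuous g)
    (hint : Integrable fun w => g w * φ w)
    (hmono : MonotoneOn (fun w => g w + C * w ^ 2) (Set.Ici 0))
    (hmean : ∫ w in Set.Ioi (0 : ℝ), g w * φ w = 0) {w : ℝ} (hw : 0 ≤ w) :
    ∫ u in (0 : ℝ)..w, g u * φ u ≤ C * (w * φ w) := by
  have hderiv (x : ℝ) : HasDerivAt (fun w => C * (w * φ w) - ∫ u in (0 : ℝ)..w, g u * φ u)
      (-((g x + C * x ^ 2 - C) * φ x)) x := by
    convert! (((hasDerivAt_id' x).mul (hasDerivAt_gaussianPDFReal_zero_one x)).const_mul C).sub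
      (hasDerivAt_integral_mul_gaussianPDFReal_zero_one hg x) using 1
    ring
  have hlim : Tendsto (fun w => C * (w * φ w) - ∫ u in (0 : ℝ)..w, g u * φ u) atTop (𝓝 0) := by
    have hJ := intervalIntegral_tendsto_integral_Ioi 0 hint.integrableOn tendsto_id
    simpa [hmean] using ((tendsto_pow_mul_gaussianPDFReal_zero_one 1).const_mul C).sub hJ
  exact sub_nonneg.1 <| nonneg_of_deriv_eq_neg_monotone_mul hderiv
    (fun x => (gaussianPDFReal_zero_one_pos x).le)
    (fun x hx y hy hxy => sub_le_sub_right (hmono hx hy hxy) C) (by simp) hlim hw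

/-- The solution `f` with `f 0 = 0` of Stein's equation `f' w - w * f w = g w` for the standard
normal distribution. -/
def steinSolution (g : ℝ → ℝ) (w : ℝ) : ℝ := (∫ u in (0 : ℝ)..w, g u * φ u) / φ w

lemma hasDerivAt_steinSolution (hg : Continuous g) (w : ℝ) :
    HasDerivAt (steinSolution g) (w * steinSolution g w + g w) w := by
  have hφ := (gaussianPDFReal_zero_one_pos w).ne'
  convert! (hasDerivAt_integral_mul_gaussianPDFReal_zero_one hg w).div
    (hasDerivAt_gaussianPDFReal_zero_one w) hφ using 1
  rw [steinSolution]
  field_simp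
  ring

lemma steinSolution_neg (heven : ∀ w, g (-w) = g w) (w : ℝ) :
    steinSolution g (-w) = -steinSolution g w := by
  have h := intervalIntegral.integral_comp_neg (a := 0) (b := w) fun u => g u * φ u
  simp only [heven, gaussianPDFReal_zero_one_neg, neg_zero] at h
  rw [steinSolution, steinSolution, h, intervalIntegral.integral_symm,
    gaussianPDFReal_zero_one_neg, neg_div]

lemma abs_steinSolution_le (hg : ∀ w, HasDerivAt g (g₁ w) w) (heven : ∀ w, g (-w) = g w)
    (hg₁ : ∀ w, |g₁ w| ≤ 2 * C * |w|) (hmean : ∫ w in Set.Ioi (0 : ℝ), g w * φ w = 0) (w : ℝ) :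
    |steinSolution g w| ≤ C * |w| := by
  have hcont : Continuous g := continuous_iff_continuousAt.2 fun w => (hg w).continuousAt
  have hint := integrable_mul_gaussianPDFReal_zero_one hcont (abs_le_add_mul_sq hg heven hg₁)
  have hnonneg (w : ℝ) (hw : 0 ≤ w) : |steinSolution g w| ≤ C * w := by
    have hupper := integral_mul_gaussianPDFReal_zero_one_le hcont hint
      (monotoneOn_add_mul_sq hg hg₁) hmean hw
    have hlower := integral_mul_gaussianPDFReal_zero_one_le (g := -g) hcont.neg
      (by simpa using hint.neg) (monotoneOn_add_mul_sq (fun w => (hg w).neg) (by simpa using hg₁))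
      (by simpa [integral_neg] using hmean) hw
    simp only [Pi.neg_apply, neg_mul, intervalIntegral.integral_neg] at hlower
    have hφ := gaussianPDFReal_zero_one_pos w
    rw [steinSolution, abs_div, abs_of_pos hφ, div_le_iff₀ hφ, mul_assoc]
    exact abs_le.2 ⟨by linarith, hupper⟩
  rcases le_total 0 w with hw | hw
  · simpa only [abs_of_nonneg hw] using hnonneg w hw
  · simpa only [abs_of_nonpos hw, steinSolution_neg heven, abs_neg]
      using hnonneg (-w) (neg_nonneg.2 hw)

lemma abs_mul_steinSolution_add_le_add_mul_sq (hg : ∀ w, HasDerivAt g (g₁ w) w)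
    (heven : ∀ w, g (-w) = g w) (hg₁ : ∀ w, |g₁ w| ≤ 2 * C * |w|)
    (hmean : ∫ w in Set.Ioi (0 : ℝ), g w * φ w = 0) (w : ℝ) :
    |w * steinSolution g w + g w| ≤ |g 0| + 2 * C * w ^ 2 := calc
  |w * steinSolution g w + g w| ≤ |w| * |steinSolution g w| + |g w| :=
    (abs_add_le _ _).trans_eq (by rw [abs_mul])
  _ ≤ |w| * (C * |w|) + (|g 0| + C * w ^ 2) := by
    gcongr
    exacts [abs_steinSolution_le hg heven hg₁ hmean w, abs_le_add_mul_sq hg heven hg₁ w]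
  _ = |g 0| + 2 * C * w ^ 2 := by rw [← sq_abs w]; ring

lemma abs_mul_steinSolution_add_le (hg : ∀ w, HasDerivAt g (g₁ w) w)
    (heven : ∀ w, g (-w) = g w) (hg₁ : ∀ w, |g₁ w| ≤ 2 * C * |w|)
    (hmean : ∫ w in Set.Ioi (0 : ℝ), g w * φ w = 0) (w : ℝ) :
    |w * steinSolution g w + g w| ≤ 3 * C := by
  have hcont : Continuous g := continuous_iff_continuousAt.2 fun w => (hg w).continuousAt
  have hf := abs_steinSolution_le hg heven hg₁ hmean
  have hgrowth := abs_mul_steinSolution_add_le_add_mul_sq hg heven hg₁ hmean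
  set f := steinSolution g
  have hderiv (w : ℝ) : HasDerivAt (fun w => (w * f w + g w) * φ w) ((f w + g₁ w) * φ w) w := by
    convert! (((hasDerivAt_id' w).mul (hasDerivAt_steinSolution hcont w)).add (hg w)).mul
      (hasDerivAt_gaussianPDFReal_zero_one w) using 1
    simp only [Pi.add_apply, Pi.mul_apply, f]
    ring
  have hderiv_le (w : ℝ) (hw : 0 ≤ w) : |(f w + g₁ w) * φ w| ≤ -(3 * C * (-w * φ w)) := by
    have h := (abs_add_le (f w) (g₁ w)).trans (add_le_add (hf w) (hg₁ w))
    rw [abs_of_nonneg hw] at h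
    have hφ := gaussianPDFReal_zero_one_pos w
    rw [abs_mul, abs_of_pos hφ]
    nlinarith
  have hnonneg (w : ℝ) (hw : 0 ≤ w) : |w * f w + g w| ≤ 3 * C := by
    have h := abs_le_of_abs_deriv_le_neg_deriv_of_tendsto_zero hderiv
      (fun x => (hasDerivAt_gaussianPDFReal_zero_one x).const_mul (3 * C))
      (fun x hx => hderiv_le x (hw.trans hx)) (tendsto_mul_gaussianPDFReal_zero_one hgrowth)
      (by simpa using (tendsto_pow_mul_gaussianPDFReal_zero_one 0).const_mul (3 * C))
    have hφ := gaussianPDFReal_zero_one_pos w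
    rw [abs_mul, abs_of_pos hφ] at h
    exact le_of_mul_le_mul_right h hφ
  rcases le_total 0 w with hw | hw
  · exact hnonneg w hw
  · simpa only [f, steinSolution_neg heven, heven, neg_mul_neg]
      using hnonneg (-w) (neg_nonneg.2 hw)

lemma exists_hasDerivAt_of_stein_equation {f f₁ : ℝ → ℝ} (hf : ∀ w, HasDerivAt f (f₁ w) w)
    (hstein : ∀ w, f₁ w = w * f w + g w) (hg : ∀ w, HasDerivAt g (g₁ w) w)
    (hg' : ∀ w, HasDerivAt g₁ (g₂ w) w) (hf_le : ∀ w, |f w| ≤ C * |w|)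
    (hf₁_le : ∀ w, |f₁ w| ≤ 3 * C) (hg₁ : ∀ w, |g₁ w| ≤ 2 * C * |w|)
    (hg₂ : ∀ w, |g₂ w| ≤ A + B * w ^ 2) :
    ∃ f₂ f₃ : ℝ → ℝ, (∀ w, HasDerivAt f₁ (f₂ w) w) ∧ (∀ w, HasDerivAt f₂ (f₃ w) w) ∧
      ∀ w, |f₃ w| ≤ (6 * C + A) + (6 * C + B) * w ^ 2 := by
  set f₂ : ℝ → ℝ := fun w => w * f₁ w + (f w + g₁ w) with hf₂_def
  set f₃ : ℝ → ℝ := fun w => w * f₂ w + (2 * f₁ w + g₂ w) with hf₃_def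
  have hf₁ (w : ℝ) : HasDerivAt f₁ (f₂ w) w := by
    rw [funext hstein]
    convert! ((hasDerivAt_id' w).mul (hf w)).add (hg w) using 1
    simp only [hf₂_def]
    ring
  have hf₂ (w : ℝ) : HasDerivAt f₂ (f₃ w) w := by
    convert! ((hasDerivAt_id' w).mul (hf₁ w)).add ((hf w).add (hg' w)) using 1
    simp only [hf₃_def]
    ring
  have hf₂_le (w : ℝ) : |f₂ w| ≤ 6 * C * |w| := calc
    |f₂ w| ≤ |w| * |f₁ w| + (|f w| + |g₁ w|) := by
      rw [← abs_mul]
      exact (abs_add_le _ _).trans (by gcongr; exact abs_add_le _ _)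
    _ ≤ |w| * (3 * C) + (C * |w| + 2 * C * |w|) := by
      gcongr
      exacts [hf₁_le w, hf_le w, hg₁ w]
    _ = 6 * C * |w| := by ring
  refine ⟨f₂, f₃, hf₁, hf₂, fun w => ?_⟩
  calc
    |f₃ w| ≤ |w| * |f₂ w| + (2 * |f₁ w| + |g₂ w|) := by
      rw [← abs_mul, ← abs_of_pos (zero_lt_two' ℝ), ← abs_mul]
      exact (abs_add_le _ _).trans (by gcongr; exact abs_add_le _ _)
    _ ≤ |w| * (6 * C * |w|) + (2 * (3 * C) + (A + B * w ^ 2)) := by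
      gcongr
      exacts [hf₂_le w, hf₁_le w, hg₂ w]
    _ = (6 * C + A) + (6 * C + B) * w ^ 2 := by rw [← sq_abs w]; ring

lemma exists_stein_equation (hg : ∀ w, HasDerivAt g (g₁ w) w)
    (hg' : ∀ w, HasDerivAt g₁ (g₂ w) w) (heven : ∀ w, g (-w) = g w)
    (hg₁ : ∀ w, |g₁ w| ≤ 2 * C * |w|) (hg₂ : ∀ w, |g₂ w| ≤ A + B * w ^ 2)
    (hmean : ∫ w in Set.Ioi (0 : ℝ), g w * φ w = 0) :
    ∃ f f₁ f₂ f₃ : ℝ → ℝ, (∀ w, HasDerivAt f (f₁ w) w) ∧ (∀ w, HasDerivAt f₁ (f₂ w) w) ∧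
      (∀ w, HasDerivAt f₂ (f₃ w) w) ∧ (∀ w, f₁ w - w * f w = g w) ∧
      ∀ w, |f₃ w| ≤ (6 * C + A) + (6 * C + B) * w ^ 2 := by
  have hcont : Continuous g := continuous_iff_continuousAt.2 fun w => (hg w).continuousAt
  have hf := hasDerivAt_steinSolution hcont
  obtain ⟨f₂, f₃, hf₁, hf₂, hf₃⟩ := exists_hasDerivAt_of_stein_equation hf (fun _ => rfl) hg hg'
    (abs_steinSolution_le hg heven hg₁ hmean) (abs_mul_steinSolution_add_le hg heven hg₁ hmean)
    hg₁ hg₂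
  exact ⟨_, _, f₂, f₃, hf, hf₁, hf₂, fun w => add_sub_cancel_left _ _, hf₃⟩

end Stein

section SignCube

variable {ι : Type*} [Fintype ι]

/-- The sum of the coordinates of a sign vector, as a real number. -/
def signSum (ε : ι → ℤˣ) : ℝ := ∑ i, ((ε i : ℤ) : ℝ)

variable [DecidableEq ι]

lemma signSum_mul_mulSingle_sub (ε : ι → ℤˣ) (i : ι) (s : ℤˣ) :
    signSum (ε * Pi.mulSingle i s) - ((ε i * s : ℤˣ) : ℤ) = signSum ε - (ε i : ℤ) := by
  have hi : (ε * Pi.mulSingle i s : ι → ℤˣ) i = ε i * s := by simp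
  rw [← hi, signSum, signSum, ← Finset.sum_erase_eq_sub (mem_univ i),
    ← Finset.sum_erase_eq_sub (mem_univ i)]
  refine Finset.sum_congr rfl fun j hj => ?_
  rw [Pi.mul_apply, Pi.mulSingle_eq_of_ne (ne_of_mem_erase hj), mul_one]

lemma expect_coord_signSum_sub (i : ι) (Φ : ℝ → ℝ → ℝ) :
    𝔼 ε : ι → ℤˣ, Φ (ε i : ℤ) (signSum ε - (ε i : ℤ)) =
      𝔼 ε : ι → ℤˣ, (Φ 1 (signSum ε - (ε i : ℤ)) + Φ (-1) (signSum ε - (ε i : ℤ))) / 2 := by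
  have hflip : 𝔼 ε : ι → ℤˣ, Φ (ε i : ℤ) (signSum ε - (ε i : ℤ)) =
      𝔼 ε : ι → ℤˣ, Φ (-(ε i : ℤ)) (signSum ε - (ε i : ℤ)) := by
    refine Fintype.expect_equiv (Equiv.mulRight (Pi.mulSingle i (-1))) _ _ fun ε => ?_
    rw [← signSum_mul_mulSingle_sub ε i (-1)]
    simp
  have havg (ε : ι → ℤˣ) : (Φ 1 (signSum ε - (ε i : ℤ)) + Φ (-1) (signSum ε - (ε i : ℤ))) / 2 =
      (Φ (ε i : ℤ) (signSum ε - (ε i : ℤ)) + Φ (-(ε i : ℤ)) (signSum ε - (ε i : ℤ))) / 2 := by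
    rcases Int.units_eq_one_or (ε i) with h | h <;> simp [h, add_comm]
  simp only [havg]
  rw [← Finset.expect_div, Finset.expect_add_distrib, ← hflip, add_self_div_two]

lemma expect_sq_signSum : 𝔼 ε : ι → ℤˣ, signSum ε ^ 2 = Fintype.card ι := by
  have hcoord (i : ι) : 𝔼 ε : ι → ℤˣ, ((ε i : ℤ) : ℝ) * signSum ε = 1 := by
    have h := expect_coord_signSum_sub i fun s v => s * (v + s)
    simp only [sub_add_cancel] at h
    rw [h]
    exact (Finset.expect_congr rfl fun ε _ => by ring).trans (Fintype.expect_const 1)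
  have hsq (ε : ι → ℤˣ) : signSum ε ^ 2 = ∑ i, ((ε i : ℤ) : ℝ) * signSum ε := by
    rw [← Finset.sum_mul, sq, ← signSum]
  simp_rw [hsq]
  rw [Finset.expect_sum_comm]
  simp [hcoord]

lemma abs_expect_stein_coord_le {f f₁ f₂ f₃ : ℝ → ℝ} {A B a : ℝ}
    (hf : ∀ w, HasDerivAt f (f₁ w) w) (hf₁ : ∀ w, HasDerivAt f₁ (f₂ w) w)
    (hf₂ : ∀ w, HasDerivAt f₂ (f₃ w) w) (hB : 0 ≤ B) (hf₃ : ∀ w, |f₃ w| ≤ A + B * w ^ 2)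
    (ha : 0 < a) (hcard : a ^ 2 * Fintype.card ι = 1) (i : ι) :
    |𝔼 ε : ι → ℤˣ, (a ^ 2 * f₁ (a * signSum ε) - a * (ε i : ℤ) * f (a * signSum ε))| ≤
      a ^ 4 / 3 * (A + 2 * B) := by
  have hstein := expect_coord_signSum_sub i fun s v =>
    a ^ 2 * f₁ (a * (v + s)) - a * s * f (a * (v + s))
  have hsq := expect_coord_signSum_sub i fun s v => (a * (v + s)) ^ 2
  simp only [sub_add_cancel] at hstein hsq
  simp only [mul_pow a (signSum _), ← Finset.mul_expect, expect_sq_signSum, hcard] at hsq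
  have htrapezoid (v : ℝ) : |(a ^ 2 * f₁ (a * (v + 1)) - a * 1 * f (a * (v + 1)) +
      (a ^ 2 * f₁ (a * (v + -1)) - a * -1 * f (a * (v + -1)))) / 2| ≤
      a ^ 4 / 3 * A + 2 * (a ^ 4 / 3) * B * (((a * (v + 1)) ^ 2 + (a * (v + -1)) ^ 2) / 2) := by
    have h := mul_le_mul_of_nonneg_left
      (abs_trapezoid_sub_le_of_growth hf hf₁ hf₂ hB hf₃ ha (a * v)) (half_pos ha).le
    rw [← abs_of_pos (half_pos ha), ← abs_mul, abs_of_pos (half_pos ha)] at h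
    convert! h using 1 <;> ring_nf
  rw [hstein]
  refine (Finset.abs_expect_le _ _).trans ((Finset.expect_le_expect fun ε _ =>
    htrapezoid (signSum ε - (ε i : ℤ))).trans_eq ?_)
  rw [Finset.expect_add_distrib, Fintype.expect_const, ← Finset.mul_expect, ← hsq]
  ring

lemma abs_expect_stein_le {f f₁ f₂ f₃ : ℝ → ℝ} {A B a : ℝ}
    (hf : ∀ w, HasDerivAt f (f₁ w) w) (hf₁ : ∀ w, HasDerivAt f₁ (f₂ w) w)
    (hf₂ : ∀ w, HasDerivAt f₂ (f₃ w) w) (hB : 0 ≤ B) (hf₃ : ∀ w, |f₃ w| ≤ A + B * w ^ 2)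
    (ha : 0 < a) (hcard : a ^ 2 * Fintype.card ι = 1) :
    |𝔼 ε : ι → ℤˣ, (f₁ (a * signSum ε) - a * signSum ε * f (a * signSum ε))| ≤
      a ^ 2 / 3 * (A + 2 * B) := by
  have hsum (ε : ι → ℤˣ) : f₁ (a * signSum ε) - a * signSum ε * f (a * signSum ε) =
      ∑ i, (a ^ 2 * f₁ (a * signSum ε) - a * (ε i : ℤ) * f (a * signSum ε)) := by
    rw [Finset.sum_sub_distrib, Finset.sum_const, card_univ, nsmul_eq_mul, ← Finset.sum_mul,
      ← Finset.mul_sum, ← signSum]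
    linear_combination -f₁ (a * signSum ε) * hcard
  simp_rw [hsum]
  rw [Finset.expect_sum_comm]
  calc |∑ i, 𝔼 ε : ι → ℤˣ, (a ^ 2 * f₁ (a * signSum ε) - a * (ε i : ℤ) * f (a * signSum ε))|
      ≤ ∑ _i : ι, a ^ 4 / 3 * (A + 2 * B) :=
        (abs_sum_le_sum_abs _ _).trans (Finset.sum_le_sum fun i _ =>
          abs_expect_stein_coord_le hf hf₁ hf₂ hB hf₃ ha hcard i)
    _ = a ^ 2 / 3 * (A + 2 * B) := by
      rw [Finset.sum_const, card_univ, nsmul_eq_mul]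
      linear_combination a ^ 2 / 3 * (A + 2 * B) * hcard

theorem abs_expect_signSum_sub_integral_gaussianReal_le [Nonempty ι] {g g₁ g₂ : ℝ → ℝ}
    {A B C : ℝ} (hg : ∀ w, HasDerivAt g (g₁ w) w)
    (hg' : ∀ w, HasDerivAt g₁ (g₂ w) w) (heven : ∀ w, g (-w) = g w)
    (hg₁ : ∀ w, |g₁ w| ≤ 2 * C * |w|) (hB : 0 ≤ B) (hg₂ : ∀ w, |g₂ w| ≤ A + B * w ^ 2) :
    |𝔼 ε : ι → ℤˣ, g (signSum ε / √(Fintype.card ι)) - ∫ w, g w ∂gaussianReal 0 1| ≤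
      (18 * C + A + 2 * B) / (3 * Fintype.card ι) := by
  have hcard : (0 : ℝ) < Fintype.card ι := by exact_mod_cast Fintype.card_pos
  have hC : 0 ≤ C := by simpa using (abs_nonneg _).trans (hg₁ 1)
  have hint : Integrable g (gaussianReal 0 1) := integrable_gaussianReal_of_growth
    (continuous_iff_continuousAt.2 fun w => (hg w).continuousAt) (abs_le_add_mul_sq hg heven hg₁)
  set m := ∫ w, g w ∂gaussianReal 0 1 with hm
  have hmean : ∫ w in Set.Ioi (0 : ℝ), (g w - m) * φ w = 0 := by
    have h := integral_gaussianReal_eq_two_mul_setIntegral_Ioi (g := fun w => g w - m)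
      fun w => by rw [heven]
    rw [integral_sub hint (integrable_const m), ← hm] at h
    simpa using h
  obtain ⟨f, f₁, f₂, f₃, hf, hf₁, hf₂, hstein, hf₃⟩ := exists_stein_equation
    (fun w => (hg w).sub_const m) hg' (fun w => by rw [heven]) hg₁ hg₂ hmean
  have hsq : (√(Fintype.card ι : ℝ))⁻¹ ^ 2 = (Fintype.card ι : ℝ)⁻¹ := by
    rw [inv_pow, sq_sqrt hcard.le]
  have h := abs_expect_stein_le (ι := ι) hf hf₁ hf₂ (by positivity) hf₃
    (inv_pos.2 (sqrt_pos.2 hcard)) (by rw [hsq, inv_mul_cancel₀ hcard.ne'])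
  simp only [hstein, hsq, ← div_eq_inv_mul, Finset.expect_sub_distrib, Fintype.expect_const] at h
  refine h.trans_eq ?_
  field_simp
  ring

end SignCube

section FriedmanTwo

lemma integral_toMeasure_uniformOfFintype {α : Type*} [Fintype α] [Nonempty α]
    [MeasurableSpace α] [MeasurableSingletonClass α] (F : α → ℝ) :
    ∫ a, F a ∂(PMF.uniformOfFintype α).toMeasure = 𝔼 a, F a := by
  rw [PMF.integral_eq_sum, Fintype.expect_eq_sum_div_card, Finset.sum_div]
  simp [PMF.uniformOfFintype_apply, div_eq_inv_mul]

lemma integral_friedmanMeasure (n r : ℕ) (F : (Fin n → Equiv.Perm (Fin r)) → ℝ) :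
    ∫ ω, F ω ∂friedmanMeasure n r = 𝔼 ω, F ω := by
  have : MeasurableSingletonClass (Equiv.Perm (Fin r)) := ⟨fun _ => trivial⟩
  exact integral_toMeasure_uniformOfFintype F

lemma rho_two_zero {n : ℕ} (i : Fin n) (ω : Fin n → Equiv.Perm (Fin 2)) :
    rho n 2 i 0 ω = -(Equiv.Perm.sign (ω i) : ℤ) / 2 := by
  have h (σ : Equiv.Perm (Fin 2)) :
      2 * ((σ 0 : ℕ) : ℤ) + 2 - 3 = -(Equiv.Perm.sign σ : ℤ) := by
    revert σ
    decide
  have h' : 2 * ((ω i 0 : ℕ) : ℝ) + 2 - 3 = -(Equiv.Perm.sign (ω i) : ℤ) := by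
    exact_mod_cast h (ω i)
  rw [rho, ← h']
  push_cast
  ring

lemma rho_two_one {n : ℕ} (i : Fin n) (ω : Fin n → Equiv.Perm (Fin 2)) :
    rho n 2 i 1 ω = (Equiv.Perm.sign (ω i) : ℤ) / 2 := by
  have h (σ : Equiv.Perm (Fin 2)) :
      2 * ((σ 1 : ℕ) : ℤ) + 2 - 3 = (Equiv.Perm.sign σ : ℤ) := by
    revert σ
    decide
  have h' : 2 * ((ω i 1 : ℕ) : ℝ) + 2 - 3 = (Equiv.Perm.sign (ω i) : ℤ) := by
    exact_mod_cast h (ω i)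
  rw [rho, ← h']
  push_cast
  ring

lemma friedman_two_eq {n : ℕ} (ω : Fin n → Equiv.Perm (Fin 2)) :
    friedman n 2 ω = (signSum (fun i => Equiv.Perm.sign (ω i)) / √n) ^ 2 := by
  rw [friedman, Fin.sum_univ_two, Sstat, Sstat, signSum]
  simp only [rho_two_zero, rho_two_one, ← Finset.sum_div, Finset.sum_neg_distrib, mul_pow, div_pow]
  rw [sq_sqrt (by norm_num), sq_sqrt (by positivity), sq_sqrt n.cast_nonneg]
  push_cast
  ring

lemma expect_friedman_two (n : ℕ) (F : ℝ → ℝ) :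
    𝔼 ω, F (friedman n 2 ω) = 𝔼 ε : Fin n → ℤˣ, F ((signSum ε / √n) ^ 2) := by
  have hsign : Function.Bijective (Equiv.Perm.sign : Equiv.Perm (Fin 2) → ℤˣ) := by decide
  exact Fintype.expect_bijective _ (Function.Bijective.piMap fun _ => hsign) _ _
    fun ω => congrArg F (friedman_two_eq ω)

lemma integral_gammaMeasure {a r : ℝ} (ha : 0 < a) (hr : 0 < r) (h : ℝ → ℝ) :
    ∫ x, h x ∂gammaMeasure a r = ∫ x in Set.Ioi (0 : ℝ), gammaPDFReal a r x * h x := by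
  have hpdf (x : ℝ) : (gammaPDF a r x).toReal • h x = gammaPDFReal a r x * h x := by
    rw [gammaPDF, ENNReal.toReal_ofReal (gammaPDFReal_nonneg ha hr x), smul_eq_mul]
  rw [gammaMeasure, integral_withDensity_eq_integral_toReal_smul (f := gammaPDF a r)
    (measurable_gammaPDFReal a r).ennreal_ofReal (.of_forall fun x => ENNReal.ofReal_lt_top)]
  simp_rw [hpdf]
  rw [← integral_Ici_eq_integral_Ioi, setIntegral_eq_integral_of_forall_compl_eq_zero]
  intro x hx
  rw [gammaPDFReal, if_neg (Set.mem_Ici.not.1 hx), zero_mul]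

lemma mul_gammaPDFReal_half_half_sq {w : ℝ} (hw : 0 < w) :
    w * gammaPDFReal (1 / 2) (1 / 2) (w ^ 2) = φ w := by
  have hpow : (w ^ 2) ^ ((1 : ℝ) / 2 - 1) = w⁻¹ := by
    rw [← rpow_natCast_mul hw.le, ← rpow_neg_one]
    norm_num
  rw [gammaPDFReal, if_pos (sq_nonneg w), hpow, Gamma_one_half_eq, ← sqrt_eq_rpow,
    gaussianPDFReal_zero_one_apply, sqrt_mul zero_le_two, one_div, sqrt_inv, neg_mul]
  field_simp

lemma integral_chiSq_one (h : ℝ → ℝ) :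
    ∫ x, h x ∂chiSq 1 = ∫ w, h (w ^ 2) ∂gaussianReal 0 1 := by
  rw [integral_gaussianReal_eq_two_mul_setIntegral_Ioi fun w => by rw [neg_sq], chiSq,
    Nat.cast_one, integral_gammaMeasure one_half_pos one_half_pos,
    ← integral_comp_rpow_Ioi_of_pos two_pos, ← integral_const_mul]
  refine setIntegral_congr_fun measurableSet_Ioi fun w hw => ?_
  simp only [← mul_gammaPDFReal_half_half_sq hw, smul_eq_mul, rpow_two,
    show (2 : ℝ) - 1 = 1 by norm_num, rpow_one]
  ring

lemma hasDerivAt_comp_sq {h h' : ℝ → ℝ}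
    (hd : ∀ x ∈ Set.Ici (0 : ℝ), HasDerivWithinAt h (h' x) (Set.Ici 0) x) (w : ℝ) :
    HasDerivAt (fun w => h (w ^ 2)) (h' (w ^ 2) * (2 * w)) w := by
  have hsq : HasDerivAt (fun w : ℝ => w ^ 2) (2 * w) w := by simpa using hasDerivAt_pow 2 w
  exact HasDerivWithinAt.comp_hasDerivAt (h := fun w : ℝ => w ^ 2) w (hd _ (sq_nonneg w)) hsq
    (.of_forall sq_nonneg)

theorem abs_expect_sq_signSum_sub_integral_chiSq_le {ι : Type*} [Fintype ι] [DecidableEq ι]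
    [Nonempty ι] {h h' h'' : ℝ → ℝ} {C1 C2 : ℝ}
    (hd1 : ∀ x ∈ Set.Ici (0 : ℝ), HasDerivWithinAt h (h' x) (Set.Ici 0) x)
    (hd2 : ∀ x ∈ Set.Ici (0 : ℝ), HasDerivWithinAt h' (h'' x) (Set.Ici 0) x)
    (hb1 : ∀ x ∈ Set.Ici (0 : ℝ), |h' x| ≤ C1) (hb2 : ∀ x ∈ Set.Ici (0 : ℝ), |h'' x| ≤ C2) :
    |𝔼 ε : ι → ℤˣ, h ((signSum ε / √(Fintype.card ι)) ^ 2) - ∫ x, h x ∂chiSq 1| ≤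
      (20 * C1 + 8 * C2) / (3 * Fintype.card ι) := by
  have hC2 : 0 ≤ C2 := (abs_nonneg _).trans (hb2 0 Set.self_mem_Ici)
  have hg' (w : ℝ) : HasDerivAt (fun w => h' (w ^ 2) * (2 * w))
      (h'' (w ^ 2) * (2 * w) * (2 * w) + h' (w ^ 2) * 2) w := by
    convert! (hasDerivAt_comp_sq hd2 w).mul ((hasDerivAt_id' w).const_mul 2) using 1
    ring
  have hg₁ (w : ℝ) : |h' (w ^ 2) * (2 * w)| ≤ 2 * C1 * |w| := by
    rw [abs_mul, abs_mul, abs_two, mul_comm 2 C1, mul_assoc]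
    gcongr
    exact hb1 _ (sq_nonneg w)
  have hg₂ (w : ℝ) : |h'' (w ^ 2) * (2 * w) * (2 * w) + h' (w ^ 2) * 2| ≤
      2 * C1 + 4 * C2 * w ^ 2 := calc
    _ ≤ |h'' (w ^ 2)| * (2 * w) ^ 2 + |h' (w ^ 2)| * 2 := by
      refine (abs_add_le _ _).trans_eq ?_
      rw [mul_assoc, ← sq, abs_mul, abs_mul, abs_two, abs_sq]
    _ ≤ C2 * (2 * w) ^ 2 + C1 * 2 := by
      gcongr
      exacts [hb2 _ (sq_nonneg w), hb1 _ (sq_nonneg w)]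
    _ = 2 * C1 + 4 * C2 * w ^ 2 := by ring
  rw [integral_chiSq_one]
  exact (abs_expect_signSum_sub_integral_gaussianReal_le (hasDerivAt_comp_sq hd1) hg'
    (fun w => by rw [neg_sq]) hg₁ (by positivity) hg₂).trans_eq (by ring)

theorem friedman_two_smooth_test_function_bound_general {n : ℕ} (hn : 1 ≤ n)
    {h h' h'' : ℝ → ℝ} {C1 C2 : ℝ}
    (hd1 : ∀ x ∈ Set.Ici (0 : ℝ), HasDerivWithinAt h (h' x) (Set.Ici 0) x)
    (hd2 : ∀ x ∈ Set.Ici (0 : ℝ), HasDerivWithinAt h' (h'' x) (Set.Ici 0) x)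
    (hb1 : ∀ x ∈ Set.Ici (0 : ℝ), |h' x| ≤ C1) (hb2 : ∀ x ∈ Set.Ici (0 : ℝ), |h'' x| ≤ C2) :
    |(∫ ω, h (friedman n 2 ω) ∂friedmanMeasure n 2) - ∫ x, h x ∂chiSq 1| ≤
      (20 * C1 + 8 * C2) / (3 * n) := by
  have : Nonempty (Fin n) := ⟨⟨0, hn⟩⟩
  rw [integral_friedmanMeasure, expect_friedman_two]
  simpa only [Fintype.card_fin] using
    abs_expect_sq_signSum_sub_integral_chiSq_le (ι := Fin n) hd1 hd2 hb1 hb2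

end FriedmanTwo

end

/-- **Proposition 1.4, (1.6) (Gaunt–Reinert).** For `n ≥ 1` and `h ∈ C_b^{1,2}(ℝ⁺)`
(twice differentiable on `[0,∞)` with bounded first and second derivatives),
`|E[h(F_2)] − χ²_{(1)}h| ≤ (1/n)(69 + 43/n)(‖h'‖ + ‖h''‖)`. -/
theorem friedman_two_smooth_test_function_bound (n : ℕ) (hn : 1 ≤ n)
    (h h' h'' : ℝ → ℝ)
    (hd1 : ∀ x ∈ Set.Ici (0 : ℝ), HasDerivAt h (h' x) x)
    (hd2 : ∀ x ∈ Set.Ici (0 : ℝ), HasDerivAt h' (h'' x) x)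
    (C1 C2 : ℝ)
    (hb1 : ∀ x ∈ Set.Ici (0 : ℝ), |h' x| ≤ C1)
    (hb2 : ∀ x ∈ Set.Ici (0 : ℝ), |h'' x| ≤ C2) :
    |(∫ ω, h (friedman n 2 ω) ∂(friedmanMeasure n 2)) - ∫ x, h x ∂(chiSq 1)|
      ≤ 1 / (n : ℝ) * (69 + 43 / n) * (C1 + C2) := by
  have hC1 : 0 ≤ C1 := (abs_nonneg _).trans (hb1 0 Set.self_mem_Ici)
  have hC2 : 0 ≤ C2 := (abs_nonneg _).trans (hb2 0 Set.self_mem_Ici)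
  calc |(∫ ω, h (friedman n 2 ω) ∂(friedmanMeasure n 2)) - ∫ x, h x ∂(chiSq 1)|
      ≤ (20 * C1 + 8 * C2) / (3 * n) :=
        friedman_two_smooth_test_function_bound_general hn
          (fun x hx => (hd1 x hx).hasDerivWithinAt) (fun x hx => (hd2 x hx).hasDerivWithinAt)
          hb1 hb2
    _ = 1 / n * (20 / 3 * C1 + 8 / 3 * C2) := by ring
    _ ≤ 1 / n * (69 * (C1 + C2)) := by gcongr; linarith
    _ ≤ 1 / n * (69 + 43 / n) * (C1 + C2) := by
      rw [mul_assoc]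
      gcongr
      exact le_add_of_nonneg_right (by positivity)
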